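/- Expected supremum of the projected noise matrix over Sobolev-constrained balls: Let c_γ := (c+γ)/γ, let S ∈ 𝒮_V with support L and φ ∈ Ψ_{S,W}, and define the projector 𝒫_L(A) := A − P_{L⊥}·A·P_{L⊥} on 𝒮_V. Let (X₁,X₁',ζ₁),…,(Xₙ,Xₙ',ζₙ) be i.i.d. copies of (X,X',ζ), where (X,X') is uniform on V×V and |ζ| ≤ 2 a.s., and set Ξ := n⁻¹∑_{j=1}^n ζ_j·E_{X_j,X_j'} − E(ζ·E_{X,X'}). Then for all δ > 0: E sup{ |⟨𝒫_L(Ξ), M⟩| : M ∈ 𝒮_V, ‖M‖₂ ≤ δ, ‖W^{1/2}M‖₂ ≤ 1 } ≤ 4·√2·√(c_γ+1)·√(1/(n·m))·δ·√(φ(δ⁻²)), where ⟨·,·⟩ is the Hilbert–Schmidt inner product. -/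

import Mathlib

open MeasureTheory Finset
open scoped ENNReal NNReal

noncomputable section

/-- Sample space for one observation: a pair of vertices `(X, X')` and a response `Y`. -/
abbrev Obs (m : ℕ) := Fin m × Fin m × ℝ

/-- Squared Hilbert–Schmidt (Frobenius) norm of a kernel. -/
def hsNormSq {m : ℕ} (S : Matrix (Fin m) (Fin m) ℝ) : ℝ := ∑ u, ∑ v, (S u v) ^ 2

/-- Squared `L₂(Π²)` norm: `‖S‖²_{L₂(Π²)} = m⁻² ‖S‖₂²`. -/
def l2PiSq {m : ℕ} (S : Matrix (Fin m) (Fin m) ℝ) : ℝ := hsNormSq S / (m : ℝ) ^ 2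

/-- Squared Sobolev (Hilbert–Schmidt) norm `‖W^{1/2}S‖₂² = ∑ₖ λₖ ‖S φₖ‖²`,
expressed through the eigendata `(lam, φ)` of `W` (indexed by `1,…,m`). -/
def sobolevHSSq {m : ℕ} (lam : ℕ → ℝ) (φ : ℕ → Fin m → ℝ)
    (S : Matrix (Fin m) (Fin m) ℝ) : ℝ :=
  ∑ k ∈ Finset.Icc 1 m, lam k * ∑ u, (S.mulVec (φ k) u) ^ 2

/-- `φ₁,…,φ_m` are orthonormal in `ℝ^V` (Euclidean inner product). -/
def OrthonormalFamily (m : ℕ) (φ : ℕ → Fin m → ℝ) : Prop :=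
  ∀ j ∈ Finset.Icc 1 m, ∀ k ∈ Finset.Icc 1 m,
    (∑ v, φ j v * φ k v) = if j = k then (1 : ℝ) else 0

/-- Eigendata of the positive semidefinite kernel `W`: orthonormal eigenfunctions `φ`,
nonnegative nondecreasing eigenvalues `lam` (indexed by `1,…,m`), `k0` the smallest index
of a positive eigenvalue, and `λ_{k+1} ≤ c·λ_k` for `k ≥ k0`. -/
structure IsEigenData (m : ℕ) (c : ℝ) (lam : ℕ → ℝ) (φ : ℕ → Fin m → ℝ) (k0 : ℕ) : Prop where
  orth : OrthonormalFamily m φ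
  nonneg : ∀ k ∈ Finset.Icc 1 m, 0 ≤ lam k
  mono : ∀ k l : ℕ, 1 ≤ k → k ≤ l → l ≤ m → lam k ≤ lam l
  k0_mem : 1 ≤ k0 ∧ k0 ≤ m ∧ 0 < lam k0
  k0_min : ∀ k ∈ Finset.Icc 1 m, 0 < lam k → k0 ≤ k
  ratio : ∀ k : ℕ, k0 ≤ k → k + 1 ≤ m → lam (k + 1) ≤ c * lam k

/-- The design `(X, X')` is uniformly distributed on `V × V`. -/
def UniformDesign (m : ℕ) (P : Measure (Obs m)) : Prop :=
  ∀ u v : Fin m, P {z : Obs m | z.1 = u ∧ z.2.1 = v} = ((m : ℝ≥0∞) ^ 2)⁻¹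

/-- The regression kernel `S_P(u,v) = m²·E_P[Y·1{X=u, X'=v}] = E_P(Y | X=u, X'=v)`. -/
def regKernel (m : ℕ) (P : Measure (Obs m)) : Matrix (Fin m) (Fin m) ℝ :=
  Matrix.of fun u v =>
    (m : ℝ) ^ 2 * ∫ z : Obs m, (if z.1 = u ∧ z.2.1 = v then z.2.2 else 0) ∂P

/-- Membership in the class `𝒫_{r,ρ,a}` of sampling distributions. -/
def MemP (m : ℕ) (r : ℕ) (ρ a : ℝ) (lam : ℕ → ℝ) (φ : ℕ → Fin m → ℝ)
    (P : Measure (Obs m)) : Prop :=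
  IsProbabilityMeasure P ∧ UniformDesign m P ∧ (∀ᵐ z ∂P, |z.2.2| ≤ a) ∧
    (regKernel m P).IsSymm ∧ (regKernel m P).rank ≤ r ∧
    sobolevHSSq lam φ (regKernel m P) ≤ ρ ^ 2 * (m : ℝ) ^ 2


/-- Squared norm of the orthogonal projection of `x` onto the support (= range, for a
symmetric matrix) of `S`. -/
def projSuppNormSq {m : ℕ} (S : Matrix (Fin m) (Fin m) ℝ) (x : Fin m → ℝ) : ℝ :=
  ‖(Submodule.orthogonalProjectionOnto (LinearMap.range (Matrix.toEuclideanLin S))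
      ((EuclideanSpace.equiv (Fin m) ℝ).symm x) : EuclideanSpace ℝ (Fin m))‖ ^ 2

/-- The coherence function `φ(S;t) := ∑_{λ_j ≤ t} ‖P_L φ_j‖²`, `L = supp(S)`. -/
def cohFn {m : ℕ} (lam : ℕ → ℝ) (φ : ℕ → Fin m → ℝ) (S : Matrix (Fin m) (Fin m) ℝ)
    (t : ℝ) : ℝ :=
  ∑ j ∈ (Finset.Icc 1 m).filter fun j => lam j ≤ t, projSuppNormSq S (φ j)

/-- The regularized coherence function
`φ̄(S;t) := sup_{0 < σ ≤ t} F̄(σ)·sup_{σ' ≥ σ} φ(S;σ')/F̄(σ')`. -/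
def cohBar {m : ℕ} (lam : ℕ → ℝ) (φ : ℕ → Fin m → ℝ) (Fbar : ℝ → ℝ)
    (S : Matrix (Fin m) (Fin m) ℝ) (t : ℝ) : ℝ :=
  sSup ((fun σ => Fbar σ *
      sSup ((fun σ' => cohFn lam φ S σ' / Fbar σ') '' Set.Ici σ)) '' Set.Ioc 0 t)

/-- `φ̄(S; ε̄⁻¹)`, with the convention `φ̄(S; +∞) := rank S` when `ε̄ = 0`. -/
def cohBarInv {m : ℕ} (lam : ℕ → ℝ) (φ : ℕ → Fin m → ℝ) (Fbar : ℝ → ℝ)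
    (S : Matrix (Fin m) (Fin m) ℝ) (ebar : ℝ) : ℝ :=
  if ebar = 0 then (S.rank : ℝ) else cohBar lam φ Fbar S ebar⁻¹

/-- The nuclear norm of a symmetric matrix: the sum of absolute values of its
eigenvalues. -/
def nuclearNorm {m : ℕ} (S : Matrix (Fin m) (Fin m) ℝ) : ℝ :=
  if h : S.IsHermitian then ∑ i, |h.eigenvalues i| else 0

/-- The spectral function `F(t) := #{j : λ_j ≤ t}`. -/
def specFn (m : ℕ) (lam : ℕ → ℝ) (t : ℝ) : ℕ :=
  ((Finset.Icc 1 m).filter fun j => lam j ≤ t).card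

/-- `F̄` is a regularized majorant of the spectral function `F`: nondecreasing,
`F ≤ F̄`, `t ↦ F̄(t)/t` nonincreasing, `∫_t^∞ F̄(s)s⁻² ds ≤ γ⁻¹ F̄(t)/t`, and
`F̄(t) = m` for `t ≥ λ_m`. -/
structure IsSpectralMajorant (m : ℕ) (γ : ℝ) (lam : ℕ → ℝ) (Fbar : ℝ → ℝ) : Prop where
  pos : ∀ t : ℝ, 0 < t → 0 < Fbar t
  mono : ∀ s t : ℝ, 0 < s → s ≤ t → Fbar s ≤ Fbar t
  majorant : ∀ t : ℝ, 0 < t → (specFn m lam t : ℝ) ≤ Fbar t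
  ratio_anti : ∀ s t : ℝ, 0 < s → s ≤ t → Fbar t / t ≤ Fbar s / s
  integral : ∀ t : ℝ, 0 < t → (∫ s in Set.Ioi t, Fbar s / s ^ 2) ≤ γ⁻¹ * Fbar t / t
  top : ∀ t : ℝ, lam m ≤ t → Fbar t = m

/-- The quantity `t_{n,m} = t + 3 log(2 log₂ n + ½ log₂(λ_m/λ̃) + 2)`. -/
def tnm (n m : ℕ) (t lamTilde : ℝ) (lam : ℕ → ℝ) : ℝ :=
  t + 3 * Real.log (2 * Real.logb 2 n + (1 / 2) * Real.logb 2 (lam m / lamTilde) + 2)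

/-- `(μ, ψ)` is a spectral representation `S = ∑ᵢ μᵢ (ψᵢ ⊗ ψᵢ)` of the symmetric
kernel `S`, with `ψ₁,…,ψ_m` orthonormal. -/
def SpectralRep (m : ℕ) (S : Matrix (Fin m) (Fin m) ℝ) (μ : ℕ → ℝ)
    (ψ : ℕ → Fin m → ℝ) : Prop :=
  OrthonormalFamily m ψ ∧
    S = Matrix.of fun u v => ∑ i ∈ Finset.Icc 1 m, μ i * ψ i u * ψ i v

/-- `‖P_L x‖²` for `L = supp(S) = l.s.{ψᵢ : μᵢ ≠ 0}`, computed from the spectral data. -/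
def projNormSqData {m : ℕ} (μ : ℕ → ℝ) (ψ : ℕ → Fin m → ℝ) (x : Fin m → ℝ) : ℝ :=
  ∑ i ∈ (Finset.Icc 1 m).filter fun i => μ i ≠ 0, (∑ v, x v * ψ i v) ^ 2

/-- The coherence function `φ(S;t) := ∑_{λ_j ≤ t} ‖P_L φ_j‖²`, from the spectral data. -/
def cohFnData {m : ℕ} (lam : ℕ → ℝ) (φ : ℕ → Fin m → ℝ) (μ : ℕ → ℝ)
    (ψ : ℕ → Fin m → ℝ) (t : ℝ) : ℝ :=
  ∑ j ∈ (Finset.Icc 1 m).filter fun j => lam j ≤ t, projNormSqData μ ψ (φ j)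

/-- Membership of `φfun` in the class `Ψ_{S,W}`: `φfun` is nonnegative and nondecreasing
on `(0,∞)`, dominates the coherence function `φ(S;·)`, and `φfun/F̄` is nonincreasing. -/
def MemPsi {m : ℕ} (lam : ℕ → ℝ) (φ : ℕ → Fin m → ℝ) (Fbar : ℝ → ℝ) (μ : ℕ → ℝ)
    (ψ : ℕ → Fin m → ℝ) (φfun : ℝ → ℝ) : Prop :=
  (∀ t : ℝ, 0 < t → 0 ≤ φfun t) ∧
  (∀ s t : ℝ, 0 < s → s ≤ t → φfun s ≤ φfun t) ∧
  (∀ t : ℝ, 0 < t → cohFnData lam φ μ ψ t ≤ φfun t) ∧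
  (∀ s t : ℝ, 0 < s → s ≤ t → φfun t / Fbar t ≤ φfun s / Fbar s)

/-- The Hilbert–Schmidt inner product of two kernels. -/
def hsInner {m : ℕ} (A B : Matrix (Fin m) (Fin m) ℝ) : ℝ := ∑ u, ∑ v, A u v * B u v

/-- The matrix `E_{u,v} = ½(e_u ⊗ e_v + e_v ⊗ e_u)`. -/
def Emat (m : ℕ) (u v : Fin m) : Matrix (Fin m) (Fin m) ℝ :=
  Matrix.of fun a b =>
    ((if a = u ∧ b = v then (1 : ℝ) else 0) + (if a = v ∧ b = u then 1 else 0)) / 2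

/-- The matrix of the orthogonal projector `P_L`, `L = supp(S)`, from spectral data. -/
def projMatData {m : ℕ} (μ : ℕ → ℝ) (ψ : ℕ → Fin m → ℝ) : Matrix (Fin m) (Fin m) ℝ :=
  Matrix.of fun u v => ∑ i ∈ (Finset.Icc 1 m).filter fun i => μ i ≠ 0, ψ i u * ψ i v

/-- The projector `𝒫_L(A) := A − P_{L^⊥} A P_{L^⊥}` on kernels. -/
def calPData {m : ℕ} (μ : ℕ → ℝ) (ψ : ℕ → Fin m → ℝ)
    (A : Matrix (Fin m) (Fin m) ℝ) : Matrix (Fin m) (Fin m) ℝ :=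
  A - (1 - projMatData μ ψ) * A * (1 - projMatData μ ψ)

/-- The noise matrix `Ξ := n⁻¹ ∑ⱼ ζⱼ E_{Xⱼ,Xⱼ'} − E(ζ E_{X,X'})`. -/
def XiMat {m : ℕ} (n : ℕ) (P : Measure (Obs m)) (ω : Fin n → Obs m) :
    Matrix (Fin m) (Fin m) ℝ :=
  (n : ℝ)⁻¹ • (∑ j, (ω j).2.2 • Emat m (ω j).1 (ω j).2.1) -
    Matrix.of fun u v => ∫ z : Obs m, z.2.2 * Emat m z.1 z.2.1 u v ∂P

/-!
Expanding `⟨𝒫(Ξ), M⟩` in the eigenbasis of `W` and applying Cauchy–Schwarz with the weights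
`λ_k + δ⁻²` bounds the supremum by `(2 ∑_k (λ_k + δ⁻²)⁻¹ ‖𝒫(Ξ) φ_k‖²)^{1/2}`, so by Jensen it is
enough to bound each `E ‖𝒫(Ξ) φ_k‖²`. As `A ↦ 𝒫(A) x` is linear, this is the variance of an
empirical mean; for a uniform design and noise bounded by `b`, it is at most
`b² / (n m²)` times `∑_{u,v} ‖𝒫(e_u ⊗ e_v) x‖²`, and for a unit vector `x` this sum is at most
`rank P_L + m ‖P_L x‖²`. Finally, both `#{k : λ_k ≤ s} · rank P_L` and `m φ(S; s)` are at most
`m (φ(δ⁻²) / F̄(δ⁻²)) F̄(s)` for `s ≥ δ⁻²`, and Abel summation turns these bounds, through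
`∫_T^∞ F̄(s) s⁻² ds ≤ γ⁻¹ F̄(T) / T`, into one for the weighted sum over `k`.
-/

section

open Matrix

section Analysis

lemma integrableOn_Ioi_inv_sq {T : ℝ} (hT : 0 < T) :
    IntegrableOn (fun s : ℝ => (s ^ 2)⁻¹) (Set.Ioi T) := by
  refine (integrableOn_Ioi_rpow_of_lt (by norm_num : (-2 : ℝ) < -1) hT).congr_fun
    (fun s hs => ?_) measurableSet_Ioi
  simp [Real.rpow_neg (hT.trans hs).le]

lemma integral_Ioi_inv_sq {T : ℝ} (hT : 0 < T) : ∫ s in Set.Ioi T, (s ^ 2)⁻¹ = T⁻¹ := by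
  calc ∫ s in Set.Ioi T, (s ^ 2)⁻¹ = ∫ s in Set.Ioi T, s ^ (-2 : ℝ) :=
        setIntegral_congr_fun measurableSet_Ioi fun s hs => by
          simp [Real.rpow_neg (hT.trans hs).le]
    _ = T⁻¹ := by
        rw [integral_Ioi_rpow_of_lt (by norm_num) hT]
        norm_num [Real.rpow_neg_one]

/-- Abel summation, in the form obtained by integrating
`1 / max (lam k) T = ∫ s in Ioi T, 1{lam k ≤ s} / s ^ 2`. -/
lemma sum_inv_max_mul_eq_integral {ι : Type*} (I : Finset ι) (lam a : ι → ℝ) {T : ℝ}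
    (hT : 0 < T) :
    ∑ k ∈ I, (max (lam k) T)⁻¹ * a k =
      ∫ s in Set.Ioi T, (∑ k ∈ I with lam k ≤ s, a k) * (s ^ 2)⁻¹ := by
  have integral_term (k : ι) : ∫ s in Set.Ioi T,
      (Set.Ici (lam k)).indicator (fun s => a k * (s ^ 2)⁻¹) s = (max (lam k) T)⁻¹ * a k := by
    have hset : (Set.Ioi T ∩ Set.Ici (lam k) : Set ℝ) =ᵐ[volume] Set.Ioi (max (lam k) T) := by
      rw [max_comm, ← Set.Ioi_inter_Ioi]
      exact (ae_eq_refl _).inter Ioi_ae_eq_Ici.symm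
    rw [setIntegral_indicator measurableSet_Ici, setIntegral_congr_set hset, integral_const_mul,
      integral_Ioi_inv_sq (lt_max_of_lt_right hT), mul_comm]
  simp_rw [← integral_term]
  rw [← integral_finsetSum _ fun k _ =>
    ((integrableOn_Ioi_inv_sq hT).const_mul (a k)).indicator measurableSet_Ici]
  refine integral_congr_ae (.of_forall fun s => ?_)
  simp only [Set.indicator_apply, Set.mem_Ici, sum_mul, sum_filter, ite_mul, zero_mul]

end Analysis

section Probability

variable {Ω : Type*} [MeasurableSpace Ω] {P : Measure Ω} [IsProbabilityMeasure P]

lemma integral_le_sqrt_integral_of_le_sqrt {X Y : Ω → ℝ} (hX : ∀ ω, 0 ≤ X ω)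
    (hXY : ∀ ω, X ω ≤ √(Y ω)) (hY0 : ∀ ω, 0 ≤ Y ω) (hY : Integrable Y P) :
    ∫ ω, X ω ∂P ≤ √(∫ ω, Y ω ∂P) := by
  have hsqrt : Integrable (fun ω => √(Y ω)) P := by
    refine (hY.add (integrable_const 1)).mono'
      (Real.continuous_sqrt.comp_aestronglyMeasurable hY.aestronglyMeasurable)
      (.of_forall fun ω => ?_)
    rw [Real.norm_of_nonneg (Real.sqrt_nonneg _)]
    exact Real.sqrt_le_iff.2 ⟨add_nonneg (hY0 ω) zero_le_one, by
      simp only [Pi.add_apply]; nlinarith [hY0 ω]⟩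
  calc ∫ ω, X ω ∂P ≤ ∫ ω, √(Y ω) ∂P :=
        integral_mono_of_nonneg (.of_forall hX) hsqrt (.of_forall hXY)
    _ ≤ √(∫ ω, Y ω ∂P) :=
        Real.strictConcaveOn_sqrt.concaveOn.le_map_integral Real.continuous_sqrt.continuousOn
          isClosed_Ici (.of_forall hY0) hY hsqrt

variable {n : ℕ} {f : Ω → ℝ}

lemma memLp_sum_comp_eval (hf : MemLp f 2 P) :
    MemLp (∑ i, fun ω : Fin n → Ω => f (ω i)) 2 (Measure.pi fun _ => P) :=
  memLp_finsetSum' _ fun i _ => hf.comp_measurePreserving (measurePreserving_eval _ i)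

lemma integrable_empiricalMean_sub_sq (hf : MemLp f 2 P) (a : ℝ) :
    Integrable (fun ω : Fin n → Ω => ((n : ℝ)⁻¹ * ∑ i, f (ω i) - a) ^ 2)
      (Measure.pi fun _ => P) := by
  simpa using (((memLp_sum_comp_eval hf).const_mul (n : ℝ)⁻¹).sub (memLp_const a)).integrable_sq

lemma integral_sum_comp_eval (hf : Integrable f P) :
    ∫ ω : Fin n → Ω, ∑ i, f (ω i) ∂(Measure.pi fun _ => P) = n * ∫ z, f z ∂P := by
  have hint (i : Fin n) : Integrable (fun ω : Fin n → Ω => f (ω i)) (Measure.pi fun _ => P) :=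
    (measurePreserving_eval _ i).integrable_comp_of_integrable hf
  rw [integral_finsetSum _ fun i _ => hint i]
  simp [integral_comp_eval (μ := fun _ : Fin n => P) hf.aestronglyMeasurable]

lemma integral_empiricalMean_sub_integral_sq_le (hn : n ≠ 0) (hf : MemLp f 2 P) :
    ∫ ω : Fin n → Ω, ((n : ℝ)⁻¹ * ∑ i, f (ω i) - ∫ z, f z ∂P) ^ 2 ∂(Measure.pi fun _ => P) ≤
      (n : ℝ)⁻¹ * ∫ z, f z ^ 2 ∂P := by
  have hS := memLp_sum_comp_eval (n := n) hf
  calc _ = ((n : ℝ)⁻¹) ^ 2 *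
          ProbabilityTheory.variance (∑ i, fun ω : Fin n → Ω => f (ω i))
            (Measure.pi fun _ => P) := by
        rw [ProbabilityTheory.variance_eq_integral hS.aestronglyMeasurable.aemeasurable,
          ← integral_const_mul]
        simp only [Finset.sum_apply, integral_sum_comp_eval (hf.integrable one_le_two)]
        congr! 2
        field_simp
    _ = (n : ℝ)⁻¹ * ProbabilityTheory.variance f P := by
        rw [ProbabilityTheory.variance_sum_pi fun _ => hf]
        simp only [sum_const, card_univ, Fintype.card_fin, nsmul_eq_mul]
        field_simp
    _ ≤ (n : ℝ)⁻¹ * ∫ z, f z ^ 2 ∂P := by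
        gcongr
        exact ProbabilityTheory.variance_le_expectation_sq hf.aestronglyMeasurable

end Probability

section Projection

variable {V : Type*} [Fintype V]

lemma transpose_eq_of_isStarProjection {p : Matrix V V ℝ} (hp : IsStarProjection p) : pᵀ = p := by
  simpa [star_eq_conjTranspose] using hp.isSelfAdjoint.star_eq

lemma row_dotProduct_row_of_isStarProjection {p : Matrix V V ℝ} (hp : IsStarProjection p)
    (u : V) : p u ⬝ᵥ p u = p u u := by
  calc p u ⬝ᵥ p u = (p * pᵀ) u u := rfl
    _ = p u u := by rw [transpose_eq_of_isStarProjection hp, hp.isIdempotentElem.eq]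

lemma trace_eq_sum_sq_of_isStarProjection {p : Matrix V V ℝ} (hp : IsStarProjection p) :
    p.trace = ∑ u, ∑ v, p u v ^ 2 := by
  refine sum_congr rfl fun u _ => ?_
  rw [diag_apply, ← row_dotProduct_row_of_isStarProjection hp]
  simp only [dotProduct, sq]

lemma trace_nonneg_of_isStarProjection {p : Matrix V V ℝ} (hp : IsStarProjection p) :
    0 ≤ p.trace := by
  rw [trace_eq_sum_sq_of_isStarProjection hp]
  positivity

lemma mulVec_dotProduct_mulVec_of_isStarProjection {p : Matrix V V ℝ} (hp : IsStarProjection p)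
    (x : V → ℝ) : p *ᵥ x ⬝ᵥ p *ᵥ x = x ⬝ᵥ p *ᵥ x := by
  rw [dotProduct_comm, ← dotProduct_transpose_mulVec, mulVec_mulVec,
    transpose_eq_of_isStarProjection hp, hp.isIdempotentElem.eq]

variable [DecidableEq V]

lemma row_dotProduct_row_one_sub_of_isStarProjection {p : Matrix V V ℝ} (hp : IsStarProjection p)
    (u : V) : p u ⬝ᵥ (1 - p) u = 0 := by
  calc p u ⬝ᵥ (1 - p) u = (p * ((1 - p)ᵀ : Matrix V V ℝ)) u u := rfl
    _ = 0 := by rw [transpose_eq_of_isStarProjection hp.one_sub, hp.mul_one_sub_self,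
        Matrix.zero_apply]

/-- The linear map `A ↦ 𝒫(A) x`, where `𝒫(A) = A - (1 - p) A (1 - p)` for a projector `p`.
It expresses the action of the projected noise matrix as a linear image of the noise matrix. -/
def projectedMulVec (p : Matrix V V ℝ) (x : V → ℝ) : Matrix V V ℝ →ₗ[ℝ] V → ℝ where
  toFun A := (A - (1 - p) * A * (1 - p)) *ᵥ x
  map_add' A B := by
    simp only [Matrix.mul_add, Matrix.add_mul, sub_mulVec, add_mulVec]
    abel
  map_smul' r A := by
    simp only [Matrix.mul_smul, Matrix.smul_mul, ← smul_sub, smul_mulVec, RingHom.id_apply]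

lemma projectedMulVec_single (p : Matrix V V ℝ) (x : V → ℝ) (u v : V) :
    projectedMulVec p x (Matrix.single u v 1) =
      x v • p.col u + (p *ᵥ x) v • (1 - p).col u := by
  have hsingle (y : V → ℝ) : Matrix.single u v 1 *ᵥ y = y v • Pi.single u 1 := by
    ext a
    simp [single_mulVec_eq, Pi.single_apply]
  have hcol : (1 - p).col u = Pi.single u 1 - p.col u := by
    rw [← mulVec_single_one, sub_mulVec, one_mulVec, mulVec_single_one]
  calc projectedMulVec p x (Matrix.single u v 1)
      = Matrix.single u v 1 *ᵥ x -
          (1 - p) *ᵥ (Matrix.single u v 1 *ᵥ ((1 - p) *ᵥ x)) := by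
        rw [mulVec_mulVec, mulVec_mulVec, ← sub_mulVec]
        rfl
    _ = x v • Pi.single u 1 - (x v - (p *ᵥ x) v) • (1 - p).col u := by
        rw [hsingle, hsingle, mulVec_smul, mulVec_single_one, sub_mulVec, one_mulVec, Pi.sub_apply]
    _ = x v • p.col u + (p *ᵥ x) v • (1 - p).col u := by
        rw [hcol]
        module

/-- The columns of `p` and `1 - p` are orthogonal, so Pythagoras gives an identity. -/
lemma sum_dotProduct_projectedMulVec_single {p : Matrix V V ℝ} (hp : IsStarProjection p)
    (x : V → ℝ) :
    ∑ u, ∑ v, projectedMulVec p x (Matrix.single u v 1) ⬝ᵥ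
        projectedMulVec p x (Matrix.single u v 1) =
      p.trace * (x ⬝ᵥ x) + (1 - p).trace * (p *ᵥ x ⬝ᵥ p *ᵥ x) := by
  have pythagoras (u v : V) : projectedMulVec p x (Matrix.single u v 1) ⬝ᵥ
      projectedMulVec p x (Matrix.single u v 1) =
        p u u * (x v * x v) + (1 - p) u u * ((p *ᵥ x) v * (p *ᵥ x) v) := by
    have hpcol : p.col u = p u := congrFun (transpose_eq_of_isStarProjection hp) u
    have hqcol : (1 - p).col u = (1 - p) u :=
      congrFun (transpose_eq_of_isStarProjection hp.one_sub) u
    rw [projectedMulVec_single, hpcol, hqcol]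
    simp only [add_dotProduct, dotProduct_add, smul_dotProduct, dotProduct_smul, smul_eq_mul,
      row_dotProduct_row_of_isStarProjection hp, row_dotProduct_row_of_isStarProjection hp.one_sub,
      dotProduct_comm ((1 - p) u) (p u), row_dotProduct_row_one_sub_of_isStarProjection hp]
    ring
  simp only [pythagoras]
  simp only [sum_add_distrib, ← mul_sum, ← sum_mul, trace, diag_apply, dotProduct]

lemma sum_dotProduct_projectedMulVec_single_le {p : Matrix V V ℝ} (hp : IsStarProjection p)
    (x : V → ℝ) :
    ∑ u, ∑ v, projectedMulVec p x (Matrix.single u v 1) ⬝ᵥ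
        projectedMulVec p x (Matrix.single u v 1) ≤
      p.trace * (x ⬝ᵥ x) + Fintype.card V * (p *ᵥ x ⬝ᵥ p *ᵥ x) := by
  rw [sum_dotProduct_projectedMulVec_single hp, trace_sub, trace_one]
  gcongr
  · exact sum_nonneg fun _ _ => mul_self_nonneg _
  · linarith [trace_nonneg_of_isStarProjection hp]

end Projection

section OrthonormalFamily

variable {m : ℕ} {φ ψ : ℕ → Fin m → ℝ}

namespace OrthonormalFamily

lemma dotProduct_eq_ite (hφ : OrthonormalFamily m φ) {j k : ℕ} (hj : j ∈ Icc 1 m)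
    (hk : k ∈ Icc 1 m) : φ j ⬝ᵥ φ k = if j = k then 1 else 0 :=
  hφ j hj k hk

lemma sum_mul_apply (hφ : OrthonormalFamily m φ) (u v : Fin m) :
    ∑ k ∈ Icc 1 m, φ k u * φ k v = if u = v then 1 else 0 := by
  let Φ : Matrix (Fin m) (Fin m) ℝ := Matrix.of fun i => φ (i + 1)
  have hrows : Φ * Φᵀ = 1 := by
    ext i j
    have hij := hφ.dotProduct_eq_ite (j := i + 1) (k := j + 1) (by simp) (by simp)
    simpa [Matrix.one_apply, Fin.ext_iff, Matrix.mul_apply, dotProduct, Φ] using hij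
  have hcols : (Φᵀ * Φ) u v = (1 : Matrix (Fin m) (Fin m) ℝ) u v := by
    rw [mul_eq_one_comm.mp hrows]
  calc ∑ k ∈ Icc 1 m, φ k u * φ k v = ∑ i ∈ range m, φ (i + 1) u * φ (i + 1) v := by
        rw [range_eq_Ico, sum_Ico_add' (fun i => φ i u * φ i v) 0 m 1]
        rfl
    _ = (Φᵀ * Φ) u v := (Fin.sum_univ_eq_sum_range (fun i => φ (i + 1) u * φ (i + 1) v) m).symm
    _ = if u = v then 1 else 0 := by rw [hcols, Matrix.one_apply]

lemma sum_vecMulVec_eq_one (hφ : OrthonormalFamily m φ) :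
    ∑ k ∈ Icc 1 m, vecMulVec (φ k) (φ k) = 1 := by
  ext u v
  simp only [Matrix.sum_apply, vecMulVec_apply, hφ.sum_mul_apply, Matrix.one_apply]

lemma sum_dotProduct_mul_dotProduct (hφ : OrthonormalFamily m φ) (x y : Fin m → ℝ) :
    ∑ k ∈ Icc 1 m, (x ⬝ᵥ φ k) * (y ⬝ᵥ φ k) = x ⬝ᵥ y := by
  calc ∑ k ∈ Icc 1 m, (x ⬝ᵥ φ k) * (y ⬝ᵥ φ k)
      = x ⬝ᵥ (∑ k ∈ Icc 1 m, vecMulVec (φ k) (φ k)) *ᵥ y := by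
        simp only [sum_mulVec, dotProduct_sum, vecMulVec_mulVec, dotProduct_smul]
        simp [dotProduct_comm y]
    _ = x ⬝ᵥ y := by rw [hφ.sum_vecMulVec_eq_one, one_mulVec]

lemma sum_mulVec_dotProduct_mulVec (hφ : OrthonormalFamily m φ)
    (A B : Matrix (Fin m) (Fin m) ℝ) :
    ∑ k ∈ Icc 1 m, A *ᵥ φ k ⬝ᵥ B *ᵥ φ k = hsInner A B :=
  sum_comm.trans (sum_congr rfl fun u _ => hφ.sum_dotProduct_mul_dotProduct (A u) (B u))

end OrthonormalFamily

lemma projMatData_eq_sum_vecMulVec (μ : ℕ → ℝ) (ψ : ℕ → Fin m → ℝ) :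
    projMatData μ ψ = ∑ i ∈ Icc 1 m with μ i ≠ 0, vecMulVec (ψ i) (ψ i) := by
  ext u v
  simp [projMatData, Matrix.sum_apply, vecMulVec_apply]

lemma OrthonormalFamily.isStarProjection_projMatData (hψ : OrthonormalFamily m ψ) (μ : ℕ → ℝ) :
    IsStarProjection (projMatData μ ψ) where
  isIdempotentElem := by
    have hij : ∀ i ∈ Icc 1 m, ∀ j ∈ Icc 1 m,
        vecMulVec (ψ i) (ψ i) * vecMulVec (ψ j) (ψ j) =
          if i = j then vecMulVec (ψ i) (ψ i) else 0 := fun i hi j hj => by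
      rw [vecMulVec_mul_vecMulVec, hψ.dotProduct_eq_ite hi hj]
      split_ifs with h <;> simp [h]
    rw [IsIdempotentElem, projMatData_eq_sum_vecMulVec, sum_mul_sum]
    refine sum_congr rfl fun i hi => ?_
    rw [sum_congr rfl fun j hj => hij i (mem_filter.1 hi).1 j (mem_filter.1 hj).1, sum_ite_eq,
      if_pos hi]
  isSelfAdjoint := by
    ext u v
    simp [projMatData, mul_comm]

lemma OrthonormalFamily.projNormSqData_eq (hψ : OrthonormalFamily m ψ) (μ : ℕ → ℝ)
    (x : Fin m → ℝ) :
    projNormSqData μ ψ x = projMatData μ ψ *ᵥ x ⬝ᵥ projMatData μ ψ *ᵥ x := by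
  rw [mulVec_dotProduct_mulVec_of_isStarProjection (hψ.isStarProjection_projMatData μ),
    projMatData_eq_sum_vecMulVec, sum_mulVec, dotProduct_sum]
  refine sum_congr rfl fun i _ => ?_
  change (x ⬝ᵥ ψ i) ^ 2 = _
  rw [vecMulVec_mulVec, dotProduct_smul, dotProduct_comm (ψ i) x, sq]
  rfl

lemma OrthonormalFamily.sum_projNormSqData (hφ : OrthonormalFamily m φ)
    (hψ : OrthonormalFamily m ψ) (μ : ℕ → ℝ) :
    ∑ k ∈ Icc 1 m, projNormSqData μ ψ (φ k) = (projMatData μ ψ).trace := by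
  simp only [hψ.projNormSqData_eq, hφ.sum_mulVec_dotProduct_mulVec, hsInner, ← sq,
    trace_eq_sum_sq_of_isStarProjection (hψ.isStarProjection_projMatData μ)]

end OrthonormalFamily

section DualNorm

variable {m : ℕ} {lam : ℕ → ℝ} {φ : ℕ → Fin m → ℝ} {T : ℝ}

/-- The square of the norm dual, for the Hilbert–Schmidt pairing, to
`M ↦ (‖W^{1/2} M‖₂² + T ‖M‖₂²)^{1/2}`, in terms of the eigendata `(lam, φ)` of `W`. -/
def dualSobolevSq (lam : ℕ → ℝ) (φ : ℕ → Fin m → ℝ) (T : ℝ) (A : Matrix (Fin m) (Fin m) ℝ) : ℝ :=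
  ∑ k ∈ Icc 1 m, (lam k + T)⁻¹ * (A *ᵥ φ k ⬝ᵥ A *ᵥ φ k)

lemma dualSobolevSq_nonneg (hlam : ∀ k ∈ Icc 1 m, 0 ≤ lam k) (hT : 0 < T)
    (A : Matrix (Fin m) (Fin m) ℝ) : 0 ≤ dualSobolevSq lam φ T A :=
  sum_nonneg fun k hk => mul_nonneg (inv_nonneg.2 (add_nonneg (hlam k hk) hT.le))
    (sum_nonneg fun _ _ => mul_self_nonneg _)

lemma OrthonormalFamily.sum_add_mul_mulVec_dotProduct_mulVec (hφ : OrthonormalFamily m φ)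
    (lam : ℕ → ℝ) (T : ℝ) (M : Matrix (Fin m) (Fin m) ℝ) :
    ∑ k ∈ Icc 1 m, (lam k + T) * (M *ᵥ φ k ⬝ᵥ M *ᵥ φ k) =
      sobolevHSSq lam φ M + T * hsNormSq M := by
  simp only [add_mul, sum_add_distrib, ← mul_sum, hφ.sum_mulVec_dotProduct_mulVec]
  simp only [sobolevHSSq, hsNormSq, hsInner, dotProduct, sq]

lemma OrthonormalFamily.hsInner_sq_le (hφ : OrthonormalFamily m φ)
    (hlam : ∀ k ∈ Icc 1 m, 0 ≤ lam k) (hT : 0 < T) (A M : Matrix (Fin m) (Fin m) ℝ) :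
    hsInner A M ^ 2 ≤ dualSobolevSq lam φ T A * (sobolevHSSq lam φ M + T * hsNormSq M) := by
  have hweight : ∀ k ∈ Icc 1 m, 0 < lam k + T := fun k hk => add_pos_of_nonneg_of_pos (hlam k hk) hT
  rw [← hφ.sum_mulVec_dotProduct_mulVec, ← hφ.sum_add_mul_mulVec_dotProduct_mulVec]
  refine sum_sq_le_sum_mul_sum_of_sq_le_mul _
    (fun k hk => mul_nonneg (inv_nonneg.2 (hweight k hk).le)
      (sum_nonneg fun _ _ => mul_self_nonneg _))
    (fun k hk => mul_nonneg (hweight k hk).le (sum_nonneg fun _ _ => mul_self_nonneg _))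
    fun k hk => ?_
  rw [mul_mul_mul_comm, inv_mul_cancel₀ (hweight k hk).ne', one_mul]
  simpa only [dotProduct, sq] using sum_mul_sq_le_sq_mul_sq univ (A *ᵥ φ k) (M *ᵥ φ k)

lemma OrthonormalFamily.abs_hsInner_le_sqrt (hφ : OrthonormalFamily m φ)
    (hlam : ∀ k ∈ Icc 1 m, 0 ≤ lam k) {δ : ℝ} (hδ : 0 < δ) (A : Matrix (Fin m) (Fin m) ℝ)
    {M : Matrix (Fin m) (Fin m) ℝ} (hM : hsNormSq M ≤ δ ^ 2) (hWM : sobolevHSSq lam φ M ≤ 1) :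
    |hsInner A M| ≤ √(2 * dualSobolevSq lam φ (δ ^ 2)⁻¹ A) := by
  have hT : 0 < (δ ^ 2)⁻¹ := by positivity
  have hscaled : (δ ^ 2)⁻¹ * hsNormSq M ≤ 1 := by
    rwa [inv_mul_le_one₀ (by positivity)]
  refine Real.abs_le_sqrt ((hφ.hsInner_sq_le hlam hT A M).trans ?_)
  rw [mul_comm]
  exact mul_le_mul_of_nonneg_right (by linarith) (dualSobolevSq_nonneg hlam hT A)

lemma OrthonormalFamily.sSup_abs_hsInner_le_sqrt (hφ : OrthonormalFamily m φ)
    (hlam : ∀ k ∈ Icc 1 m, 0 ≤ lam k) {δ : ℝ} (hδ : 0 < δ) (A : Matrix (Fin m) (Fin m) ℝ) :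
    sSup {x : ℝ | ∃ M : Matrix (Fin m) (Fin m) ℝ, M.IsSymm ∧ hsNormSq M ≤ δ ^ 2 ∧
        sobolevHSSq lam φ M ≤ 1 ∧ x = |hsInner A M|} ≤
      √(2 * dualSobolevSq lam φ (δ ^ 2)⁻¹ A) := by
  refine Real.sSup_le ?_ (Real.sqrt_nonneg _)
  rintro _ ⟨M, -, hM, hWM, rfl⟩
  exact hφ.abs_hsInner_le_sqrt hlam hδ A hM hWM

end DualNorm

section SpectralMajorant

variable {m : ℕ} {γ T : ℝ} {lam : ℕ → ℝ} {Fbar : ℝ → ℝ}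

namespace IsSpectralMajorant

lemma le_card (hF : IsSpectralMajorant m γ lam Fbar) {s : ℝ} (hs : 0 < s) : Fbar s ≤ m := by
  rw [← hF.top (max s (lam m)) (le_max_right _ _)]
  exact hF.mono _ _ hs (le_max_left _ _)

lemma integrableOn_div_sq (hF : IsSpectralMajorant m γ lam Fbar) (hT : 0 < T) :
    IntegrableOn (fun s => Fbar s / s ^ 2) (Set.Ioi T) := by
  have hmeas : AEMeasurable Fbar (volume.restrict (Set.Ioi T)) :=
    aemeasurable_restrict_of_monotoneOn measurableSet_Ioi
      fun s hs t _ hst => hF.mono s t (hT.trans hs) hst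
  refine Integrable.mono' ((integrableOn_Ioi_inv_sq hT).const_mul (m : ℝ))
    (hmeas.div (by fun_prop)).aestronglyMeasurable
    ((ae_restrict_mem measurableSet_Ioi).mono fun s hs => ?_)
  have hs0 : 0 < s := hT.trans hs
  rw [Real.norm_of_nonneg (div_nonneg (hF.pos s hs0).le (sq_nonneg s)), div_eq_mul_inv]
  gcongr
  exact hF.le_card hs0

lemma sum_inv_add_mul_le (hF : IsSpectralMajorant m γ lam Fbar)
    (hlam : ∀ k ∈ Icc 1 m, 0 ≤ lam k) (hT : 0 < T) {a : ℕ → ℝ} (ha : ∀ k, 0 ≤ a k) {C : ℝ}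
    (hC : 0 ≤ C) (haF : ∀ s, T < s → ∑ k ∈ Icc 1 m with lam k ≤ s, a k ≤ C * Fbar s) :
    ∑ k ∈ Icc 1 m, (lam k + T)⁻¹ * a k ≤ C * (γ⁻¹ * Fbar T / T) := by
  calc ∑ k ∈ Icc 1 m, (lam k + T)⁻¹ * a k ≤ ∑ k ∈ Icc 1 m, (max (lam k) T)⁻¹ * a k := by
        refine sum_le_sum fun k hk => mul_le_mul_of_nonneg_right ?_ (ha k)
        exact inv_anti₀ (lt_max_of_lt_right hT) (max_le_add_of_nonneg (hlam k hk) hT.le)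
    _ = ∫ s in Set.Ioi T, (∑ k ∈ Icc 1 m with lam k ≤ s, a k) * (s ^ 2)⁻¹ :=
        sum_inv_max_mul_eq_integral _ lam a hT
    _ ≤ ∫ s in Set.Ioi T, C * (Fbar s / s ^ 2) := by
        refine integral_mono_of_nonneg (.of_forall fun s => ?_)
          ((hF.integrableOn_div_sq hT).const_mul C)
          ((ae_restrict_mem measurableSet_Ioi).mono fun s hs => ?_)
        · exact mul_nonneg (sum_nonneg fun k _ => ha k) (inv_nonneg.2 (sq_nonneg s))
        · simp only [div_eq_mul_inv, ← mul_assoc]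
          gcongr
          exact haF s hs
    _ = C * ∫ s in Set.Ioi T, Fbar s / s ^ 2 := integral_const_mul _ _
    _ ≤ C * (γ⁻¹ * Fbar T / T) := mul_le_mul_of_nonneg_left (hF.integral T hT) hC

end IsSpectralMajorant

variable {φ ψ : ℕ → Fin m → ℝ} {μ : ℕ → ℝ} {φfun : ℝ → ℝ}

lemma projNormSqData_nonneg (μ : ℕ → ℝ) (ψ : ℕ → Fin m → ℝ) (x : Fin m → ℝ) :
    0 ≤ projNormSqData μ ψ x :=
  sum_nonneg fun _ _ => sq_nonneg _

namespace MemPsi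

lemma le_mul_majorant (hΨ : MemPsi lam φ Fbar μ ψ φfun) (hF : IsSpectralMajorant m γ lam Fbar)
    {s : ℝ} (hT : 0 < T) (hs : T ≤ s) : φfun s ≤ φfun T / Fbar T * Fbar s := by
  rw [← div_le_iff₀ (hF.pos s (hT.trans_le hs))]
  exact hΨ.2.2.2 T s hT hs

lemma trace_projMatData_le (hΨ : MemPsi lam φ Fbar μ ψ φfun)
    (hF : IsSpectralMajorant m γ lam Fbar) (hφ : OrthonormalFamily m φ)
    (hψ : OrthonormalFamily m ψ) (hT : 0 < T) :
    (projMatData μ ψ).trace ≤ m * (φfun T / Fbar T) := by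
  obtain ⟨s, hTs, hms, hs⟩ : ∃ s, T ≤ s ∧ lam m ≤ s ∧ ∀ k ∈ Icc 1 m, lam k ≤ s :=
    ((Filter.eventually_ge_atTop T).and <| (Filter.eventually_ge_atTop (lam m)).and <|
      (Filter.eventually_all_finset _).2 fun k _ => Filter.eventually_ge_atTop (lam k)).exists
  calc (projMatData μ ψ).trace = cohFnData lam φ μ ψ s := by
        rw [cohFnData, filter_true_of_mem hs, hφ.sum_projNormSqData hψ]
    _ ≤ φfun s := hΨ.2.2.1 s (hT.trans_le hTs)
    _ ≤ φfun T / Fbar T * Fbar s := hΨ.le_mul_majorant hF hT hTs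
    _ = m * (φfun T / Fbar T) := by rw [hF.top s hms, mul_comm]

lemma sum_trace_add_mul_projNormSqData_le (hΨ : MemPsi lam φ Fbar μ ψ φfun)
    (hF : IsSpectralMajorant m γ lam Fbar) (hφ : OrthonormalFamily m φ)
    (hψ : OrthonormalFamily m ψ) (hT : 0 < T) {s : ℝ} (hs : T ≤ s) :
    ∑ k ∈ Icc 1 m with lam k ≤ s, ((projMatData μ ψ).trace + m * projNormSqData μ ψ (φ k)) ≤
      2 * m * (φfun T / Fbar T) * Fbar s := by
  have hs0 : 0 < s := hT.trans_le hs
  calc ∑ k ∈ Icc 1 m with lam k ≤ s, ((projMatData μ ψ).trace + m * projNormSqData μ ψ (φ k))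
      = specFn m lam s * (projMatData μ ψ).trace + m * cohFnData lam φ μ ψ s := by
        rw [sum_add_distrib, ← mul_sum, sum_const, nsmul_eq_mul, specFn, cohFnData]
    _ ≤ Fbar s * (m * (φfun T / Fbar T)) + m * (φfun T / Fbar T * Fbar s) := by
        gcongr
        · exact trace_nonneg_of_isStarProjection (hψ.isStarProjection_projMatData μ)
        · exact (hF.pos s hs0).le
        · exact hF.majorant s hs0
        · exact hΨ.trace_projMatData_le hF hφ hψ hT
        · exact (hΨ.2.2.1 s hs0).trans (hΨ.le_mul_majorant hF hT hs)
    _ = 2 * m * (φfun T / Fbar T) * Fbar s := by ring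

lemma sum_inv_add_mul_trace_add_le (hΨ : MemPsi lam φ Fbar μ ψ φfun)
    (hF : IsSpectralMajorant m γ lam Fbar) (hlam : ∀ k ∈ Icc 1 m, 0 ≤ lam k)
    (hφ : OrthonormalFamily m φ) (hψ : OrthonormalFamily m ψ) (hT : 0 < T) :
    ∑ k ∈ Icc 1 m, (lam k + T)⁻¹ * ((projMatData μ ψ).trace + m * projNormSqData μ ψ (φ k)) ≤
      2 * m * γ⁻¹ * φfun T / T := by
  have hFT : 0 < Fbar T := hF.pos T hT
  have htrace : 0 ≤ (projMatData μ ψ).trace :=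
    trace_nonneg_of_isStarProjection (hψ.isStarProjection_projMatData μ)
  calc _ ≤ 2 * m * (φfun T / Fbar T) * (γ⁻¹ * Fbar T / T) :=
        hF.sum_inv_add_mul_le hlam hT
          (fun k => add_nonneg htrace (mul_nonneg m.cast_nonneg (projNormSqData_nonneg μ ψ _)))
          (mul_nonneg (by positivity) (div_nonneg (hΨ.1 T hT) hFT.le))
          fun s hs => hΨ.sum_trace_add_mul_projNormSqData_le hF hφ hψ hT hs.le
    _ = 2 * m * γ⁻¹ * φfun T / T := by field_simp

end MemPsi

end SpectralMajorant

section Noise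

lemma linearMap_apply_eq_sum_mul_single {V : Type*} [Fintype V] [DecidableEq V]
    (l : Matrix V V ℝ →ₗ[ℝ] ℝ) (A : Matrix V V ℝ) :
    l A = ∑ u, ∑ v, A u v * l (Matrix.single u v 1) := by
  conv_lhs => rw [Matrix.matrix_eq_sum_single A]
  simp only [map_sum]
  refine sum_congr rfl fun u _ => sum_congr rfl fun v _ => ?_
  rw [← smul_eq_mul, ← map_smul, Matrix.smul_single, smul_eq_mul, mul_one]

variable {m n : ℕ}

lemma Emat_eq_smul_single_add_single (u v : Fin m) :
    Emat m u v = (1 / 2 : ℝ) • (Matrix.single u v 1 + Matrix.single v u 1) := by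
  ext a b
  simp only [Emat, Matrix.of_apply, Matrix.smul_apply, Matrix.add_apply, Matrix.single_apply,
    smul_eq_mul, eq_comm (a := a), eq_comm (a := b)]
  ring

lemma sum_sq_apply_Emat_le (l : Matrix (Fin m) (Fin m) ℝ →ₗ[ℝ] ℝ) :
    ∑ u, ∑ v, l (Emat m u v) ^ 2 ≤ ∑ u, ∑ v, l (Matrix.single u v 1) ^ 2 := by
  calc ∑ u, ∑ v, l (Emat m u v) ^ 2
      ≤ ∑ u, ∑ v, (l (Matrix.single u v 1) ^ 2 + l (Matrix.single v u 1) ^ 2) / 2 := by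
        gcongr with u _ v _
        rw [Emat_eq_smul_single_add_single, map_smul, map_add, smul_eq_mul]
        nlinarith [sq_nonneg (l (Matrix.single u v 1) - l (Matrix.single v u 1))]
    _ = ∑ u, ∑ v, l (Matrix.single u v 1) ^ 2 := by
        simp only [← sum_div, sum_add_distrib]
        rw [sum_comm (f := fun u v => l (Matrix.single v u 1) ^ 2), add_self_div_two]

variable {P : Measure (Obs m)}

lemma UniformDesign.integral_eq [IsFiniteMeasure P] (hU : UniformDesign m P)
    (g : Fin m → Fin m → ℝ) :
    ∫ z, g z.1 z.2.1 ∂P = ((m : ℝ) ^ 2)⁻¹ * ∑ u, ∑ v, g u v := by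
  have hmeas : Measurable fun z : Obs m => (z.1, z.2.1) := by fun_prop
  have hatom (w : Fin m × Fin m) :
      (P.map fun z => (z.1, z.2.1)).real {w} = ((m : ℝ) ^ 2)⁻¹ := by
    have hfiber : (fun z : Obs m => (z.1, z.2.1)) ⁻¹' {w} = {z | z.1 = w.1 ∧ z.2.1 = w.2} := by
      ext z
      simp [Prod.ext_iff]
    rw [map_measureReal_apply hmeas (measurableSet_singleton w), hfiber, measureReal_def, hU]
    simp
  calc ∫ z, g z.1 z.2.1 ∂P
      = ∫ w : Fin m × Fin m, g w.1 w.2 ∂(P.map fun z => (z.1, z.2.1)) :=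
        (integral_map hmeas.aemeasurable (f := fun w => g w.1 w.2)
          (measurable_of_finite _).aestronglyMeasurable).symm
    _ = ((m : ℝ) ^ 2)⁻¹ * ∑ u, ∑ v, g u v := by
        rw [integral_fintype .of_finite, Fintype.sum_prod_type]
        simp only [hatom, smul_eq_mul, mul_sum]

lemma memLp_comp_design [IsFiniteMeasure P] (g : Fin m → Fin m → ℝ) (p : ℝ≥0∞) :
    MemLp (fun z : Obs m => g z.1 z.2.1) p P := by
  obtain ⟨C, hC⟩ := Finite.exists_le fun w : Fin m × Fin m => ‖g w.1 w.2‖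
  exact .of_bound ((measurable_of_finite fun w : Fin m × Fin m => g w.1 w.2).comp
    (by fun_prop : Measurable fun z : Obs m => (z.1, z.2.1))).aestronglyMeasurable C
    (.of_forall fun z => hC (z.1, z.2.1))

variable {b : ℝ}

lemma memLp_noise_mul [IsFiniteMeasure P] (hb : ∀ᵐ z ∂P, |z.2.2| ≤ b) (g : Fin m → Fin m → ℝ)
    (p : ℝ≥0∞) : MemLp (fun z : Obs m => z.2.2 * g z.1 z.2.1) p P :=
  (memLp_comp_design g p).mul
    (memLp_top_of_bound (by fun_prop : Measurable _).aestronglyMeasurable b hb)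

lemma UniformDesign.integral_noise_mul_sq_le [IsFiniteMeasure P] (hU : UniformDesign m P)
    (hb : ∀ᵐ z ∂P, |z.2.2| ≤ b) (g : Fin m → Fin m → ℝ) :
    ∫ z, (z.2.2 * g z.1 z.2.1) ^ 2 ∂P ≤ b ^ 2 * (((m : ℝ) ^ 2)⁻¹ * ∑ u, ∑ v, g u v ^ 2) := by
  have hb_sq : ∀ᵐ z ∂P, (z.2.2 * g z.1 z.2.1) ^ 2 ≤ (b * g z.1 z.2.1) ^ 2 := by
    filter_upwards [hb] with z hz
    rw [mul_pow, mul_pow, ← sq_abs z.2.2]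
    gcongr
  calc ∫ z, (z.2.2 * g z.1 z.2.1) ^ 2 ∂P ≤ ∫ z, (b * g z.1 z.2.1) ^ 2 ∂P := by
        refine integral_mono_ae (memLp_noise_mul hb g 2).integrable_sq ?_ hb_sq
        exact ((memLp_comp_design g 2).const_mul b).integrable_sq
    _ = b ^ 2 * (((m : ℝ) ^ 2)⁻¹ * ∑ u, ∑ v, g u v ^ 2) := by
        simp only [mul_pow]
        rw [integral_const_mul, hU.integral_eq fun u v => g u v ^ 2]

lemma apply_integral_noise_mul_Emat [IsFiniteMeasure P] (hb : ∀ᵐ z ∂P, |z.2.2| ≤ b)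
    (l : Matrix (Fin m) (Fin m) ℝ →ₗ[ℝ] ℝ) :
    l (Matrix.of fun u v => ∫ z : Obs m, z.2.2 * Emat m z.1 z.2.1 u v ∂P) =
      ∫ z : Obs m, z.2.2 * l (Emat m z.1 z.2.1) ∂P := by
  have hint (u v : Fin m) : Integrable
      (fun z : Obs m => z.2.2 * Emat m z.1 z.2.1 u v * l (Matrix.single u v 1)) P :=
    ((memLp_noise_mul hb (fun u' v' => Emat m u' v' u v) 1).integrable le_rfl).mul_const _
  calc l (Matrix.of fun u v => ∫ z : Obs m, z.2.2 * Emat m z.1 z.2.1 u v ∂P)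
      = ∑ u, ∑ v, ∫ z : Obs m, z.2.2 * Emat m z.1 z.2.1 u v * l (Matrix.single u v 1) ∂P := by
        simp only [linearMap_apply_eq_sum_mul_single l (Matrix.of _), Matrix.of_apply,
          integral_mul_const]
    _ = ∫ z : Obs m, ∑ u, ∑ v, z.2.2 * Emat m z.1 z.2.1 u v * l (Matrix.single u v 1) ∂P := by
        rw [integral_finsetSum _ fun u _ => integrable_finsetSum _ fun v _ => hint u v]
        simp only [integral_finsetSum _ fun v _ => hint _ v]
    _ = ∫ z : Obs m, z.2.2 * l (Emat m z.1 z.2.1) ∂P := by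
        simp only [linearMap_apply_eq_sum_mul_single l (Emat m _ _), mul_sum, mul_assoc]

lemma apply_XiMat [IsFiniteMeasure P] (hb : ∀ᵐ z ∂P, |z.2.2| ≤ b)
    (l : Matrix (Fin m) (Fin m) ℝ →ₗ[ℝ] ℝ) (ω : Fin n → Obs m) :
    l (XiMat n P ω) = (n : ℝ)⁻¹ * ∑ j, (ω j).2.2 * l (Emat m (ω j).1 (ω j).2.1) -
      ∫ z : Obs m, z.2.2 * l (Emat m z.1 z.2.1) ∂P := by
  simp only [XiMat, map_sub, map_smul, map_sum, apply_integral_noise_mul_Emat hb, smul_eq_mul]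

variable [IsProbabilityMeasure P]

lemma integrable_apply_XiMat_sq (hb : ∀ᵐ z ∂P, |z.2.2| ≤ b)
    (l : Matrix (Fin m) (Fin m) ℝ →ₗ[ℝ] ℝ) :
    Integrable (fun ω => l (XiMat n P ω) ^ 2) (Measure.pi fun _ : Fin n => P) := by
  simp only [apply_XiMat hb]
  exact integrable_empiricalMean_sub_sq (memLp_noise_mul hb (fun u v => l (Emat m u v)) 2) _

lemma UniformDesign.integral_apply_XiMat_sq_le (hU : UniformDesign m P) (hn : n ≠ 0)
    (hb : ∀ᵐ z ∂P, |z.2.2| ≤ b) (l : Matrix (Fin m) (Fin m) ℝ →ₗ[ℝ] ℝ) :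
    ∫ ω, l (XiMat n P ω) ^ 2 ∂(Measure.pi fun _ : Fin n => P) ≤
      b ^ 2 / (n * m ^ 2) * ∑ u, ∑ v, l (Matrix.single u v 1) ^ 2 := by
  calc ∫ ω, l (XiMat n P ω) ^ 2 ∂(Measure.pi fun _ : Fin n => P)
      ≤ (n : ℝ)⁻¹ * ∫ z : Obs m, (z.2.2 * l (Emat m z.1 z.2.1)) ^ 2 ∂P := by
        simp only [apply_XiMat hb]
        exact integral_empiricalMean_sub_integral_sq_le hn
          (f := fun z : Obs m => z.2.2 * l (Emat m z.1 z.2.1))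
          (memLp_noise_mul hb (fun u v => l (Emat m u v)) 2)
    _ ≤ (n : ℝ)⁻¹ * (b ^ 2 * (((m : ℝ) ^ 2)⁻¹ * ∑ u, ∑ v, l (Matrix.single u v 1) ^ 2)) := by
        gcongr
        exact (hU.integral_noise_mul_sq_le hb fun u v => l (Emat m u v)).trans
          (by gcongr ?_ * (?_ * ?_); exact sum_sq_apply_Emat_le l)
    _ = b ^ 2 / (n * m ^ 2) * ∑ u, ∑ v, l (Matrix.single u v 1) ^ 2 := by
        field_simp

variable {ι : Type*}

lemma integrable_apply_XiMat_apply_sq (hb : ∀ᵐ z ∂P, |z.2.2| ≤ b)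
    (L : Matrix (Fin m) (Fin m) ℝ →ₗ[ℝ] ι → ℝ) (i : ι) :
    Integrable (fun ω => L (XiMat n P ω) i ^ 2) (Measure.pi fun _ : Fin n => P) := by
  simpa only [LinearMap.comp_apply, LinearMap.proj_apply] using
    integrable_apply_XiMat_sq hb (LinearMap.proj i ∘ₗ L)

variable [Fintype ι]

lemma integrable_dotProduct_apply_XiMat (hb : ∀ᵐ z ∂P, |z.2.2| ≤ b)
    (L : Matrix (Fin m) (Fin m) ℝ →ₗ[ℝ] ι → ℝ) :
    Integrable (fun ω => L (XiMat n P ω) ⬝ᵥ L (XiMat n P ω)) (Measure.pi fun _ : Fin n => P) := by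
  simp only [dotProduct, ← sq]
  exact integrable_finsetSum _ fun i _ => integrable_apply_XiMat_apply_sq hb L i

lemma UniformDesign.integral_dotProduct_apply_XiMat_le (hU : UniformDesign m P) (hn : n ≠ 0)
    (hb : ∀ᵐ z ∂P, |z.2.2| ≤ b) (L : Matrix (Fin m) (Fin m) ℝ →ₗ[ℝ] ι → ℝ) :
    ∫ ω, L (XiMat n P ω) ⬝ᵥ L (XiMat n P ω) ∂(Measure.pi fun _ : Fin n => P) ≤
      b ^ 2 / (n * m ^ 2) *
        ∑ u, ∑ v, L (Matrix.single u v 1) ⬝ᵥ L (Matrix.single u v 1) := by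
  calc ∫ ω, L (XiMat n P ω) ⬝ᵥ L (XiMat n P ω) ∂(Measure.pi fun _ : Fin n => P)
      = ∑ i, ∫ ω, L (XiMat n P ω) i ^ 2 ∂(Measure.pi fun _ : Fin n => P) := by
        simp only [dotProduct, ← sq]
        exact integral_finsetSum _ fun i _ => integrable_apply_XiMat_apply_sq hb L i
    _ ≤ ∑ i, b ^ 2 / (n * m ^ 2) * ∑ u, ∑ v, L (Matrix.single u v 1) i ^ 2 :=
        sum_le_sum fun i _ => hU.integral_apply_XiMat_sq_le hn hb (LinearMap.proj i ∘ₗ L)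
    _ = b ^ 2 / (n * m ^ 2) *
          ∑ u, ∑ v, L (Matrix.single u v 1) ⬝ᵥ L (Matrix.single u v 1) := by
        rw [← mul_sum, sum_comm]
        simp only [dotProduct, ← sq, sum_comm (s := univ (α := ι))]

variable {γ T : ℝ} {lam μ : ℕ → ℝ} {φ ψ : ℕ → Fin m → ℝ} {Fbar φfun : ℝ → ℝ}

lemma integrable_dualSobolevSq_calPData_XiMat (hb : ∀ᵐ z ∂P, |z.2.2| ≤ b) (lam : ℕ → ℝ)
    (φ : ℕ → Fin m → ℝ) (T : ℝ) (μ : ℕ → ℝ) (ψ : ℕ → Fin m → ℝ) :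
    Integrable (fun ω => dualSobolevSq lam φ T (calPData μ ψ (XiMat n P ω)))
      (Measure.pi fun _ : Fin n => P) :=
  integrable_finsetSum _ fun k _ =>
    (integrable_dotProduct_apply_XiMat hb (projectedMulVec (projMatData μ ψ) (φ k))).const_mul _

lemma UniformDesign.integral_calPData_XiMat_mulVec_le (hU : UniformDesign m P) (hn : n ≠ 0)
    (hb : ∀ᵐ z ∂P, |z.2.2| ≤ b) (hψ : OrthonormalFamily m ψ) (μ : ℕ → ℝ) (x : Fin m → ℝ) :
    ∫ ω, calPData μ ψ (XiMat n P ω) *ᵥ x ⬝ᵥ calPData μ ψ (XiMat n P ω) *ᵥ x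
        ∂(Measure.pi fun _ : Fin n => P) ≤
      b ^ 2 / (n * m ^ 2) *
        ((projMatData μ ψ).trace * (x ⬝ᵥ x) + m * projNormSqData μ ψ x) := by
  refine (hU.integral_dotProduct_apply_XiMat_le hn hb
    (projectedMulVec (projMatData μ ψ) x)).trans ?_
  gcongr
  simpa only [Fintype.card_fin, hψ.projNormSqData_eq] using
    sum_dotProduct_projectedMulVec_single_le (hψ.isStarProjection_projMatData μ) x

lemma UniformDesign.integral_dualSobolevSq_calPData_XiMat_le (hU : UniformDesign m P)
    (hn : n ≠ 0) (hb : ∀ᵐ z ∂P, |z.2.2| ≤ b) (hφ : OrthonormalFamily m φ)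
    (hlam : ∀ k ∈ Icc 1 m, 0 ≤ lam k) (hF : IsSpectralMajorant m γ lam Fbar)
    (hψ : OrthonormalFamily m ψ) (hΨ : MemPsi lam φ Fbar μ ψ φfun) (hT : 0 < T) :
    ∫ ω, dualSobolevSq lam φ T (calPData μ ψ (XiMat n P ω)) ∂(Measure.pi fun _ : Fin n => P) ≤
      2 * b ^ 2 * (γ⁻¹ * (1 / (n * m) * φfun T)) / T := by
  calc ∫ ω, dualSobolevSq lam φ T (calPData μ ψ (XiMat n P ω)) ∂(Measure.pi fun _ : Fin n => P)
      = ∑ k ∈ Icc 1 m, (lam k + T)⁻¹ * ∫ ω, calPData μ ψ (XiMat n P ω) *ᵥ φ k ⬝ᵥ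
          calPData μ ψ (XiMat n P ω) *ᵥ φ k ∂(Measure.pi fun _ : Fin n => P) := by
        simp only [← integral_const_mul]
        exact integral_finsetSum _ fun k _ => (integrable_dotProduct_apply_XiMat hb
          (projectedMulVec (projMatData μ ψ) (φ k))).const_mul _
    _ ≤ ∑ k ∈ Icc 1 m, (lam k + T)⁻¹ * (b ^ 2 / (n * m ^ 2) *
          ((projMatData μ ψ).trace + m * projNormSqData μ ψ (φ k))) := by
        refine sum_le_sum fun k hk => mul_le_mul_of_nonneg_left ?_
          (inv_nonneg.2 (add_nonneg (hlam k hk) hT.le))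
        simpa [hφ.dotProduct_eq_ite hk hk] using
          hU.integral_calPData_XiMat_mulVec_le hn hb hψ μ (φ k)
    _ = b ^ 2 / (n * m ^ 2) * ∑ k ∈ Icc 1 m, (lam k + T)⁻¹ *
          ((projMatData μ ψ).trace + m * projNormSqData μ ψ (φ k)) := by
        simp only [mul_left_comm _ (b ^ 2 / _), ← mul_sum]
    _ ≤ b ^ 2 / (n * m ^ 2) * (2 * m * γ⁻¹ * φfun T / T) := by
        gcongr
        exact hΨ.sum_inv_add_mul_trace_add_le hF hlam hφ hψ hT
    _ = 2 * b ^ 2 * (γ⁻¹ * (1 / (n * m) * φfun T)) / T := by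
        field_simp

theorem projected_noise_sup_bound_general (hn : n ≠ 0) (hφ : OrthonormalFamily m φ)
    (hlam : ∀ k ∈ Icc 1 m, 0 ≤ lam k) (hF : IsSpectralMajorant m γ lam Fbar)
    (hψ : OrthonormalFamily m ψ) (hΨ : MemPsi lam φ Fbar μ ψ φfun) (hU : UniformDesign m P)
    (hb : ∀ᵐ z ∂P, |z.2.2| ≤ b) {δ : ℝ} (hδ : 0 < δ) :
    ∫ ω, sSup {x : ℝ | ∃ M : Matrix (Fin m) (Fin m) ℝ, M.IsSymm ∧ hsNormSq M ≤ δ ^ 2 ∧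
          sobolevHSSq lam φ M ≤ 1 ∧ x = |hsInner (calPData μ ψ (XiMat n P ω)) M|}
        ∂(Measure.pi fun _ : Fin n => P) ≤
      2 * b * √γ⁻¹ * √(1 / (n * m)) * δ * √(φfun (δ ^ 2)⁻¹) := by
  have hT : 0 < (δ ^ 2)⁻¹ := by positivity
  have hb0 : 0 ≤ b := let ⟨_, hz⟩ := hb.exists; (abs_nonneg _).trans hz
  have hφ0 : 0 ≤ φfun (δ ^ 2)⁻¹ := hΨ.1 _ hT
  calc _ ≤ √(∫ ω, 2 * dualSobolevSq lam φ (δ ^ 2)⁻¹ (calPData μ ψ (XiMat n P ω))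
          ∂(Measure.pi fun _ : Fin n => P)) :=
        integral_le_sqrt_integral_of_le_sqrt
          (fun ω => Real.sSup_nonneg (by rintro _ ⟨M, -, -, -, rfl⟩; exact abs_nonneg _))
          (fun ω => hφ.sSup_abs_hsInner_le_sqrt hlam hδ _)
          (fun ω => mul_nonneg zero_le_two (dualSobolevSq_nonneg hlam hT _))
          ((integrable_dualSobolevSq_calPData_XiMat hb lam φ _ μ ψ).const_mul 2)
    _ ≤ √(2 * (2 * b ^ 2 * (γ⁻¹ * (1 / (n * m) * φfun (δ ^ 2)⁻¹)) / (δ ^ 2)⁻¹)) := by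
        rw [integral_const_mul]
        gcongr
        exact hU.integral_dualSobolevSq_calPData_XiMat_le hn hb hφ hlam hF hψ hΨ hT
    _ = √((2 * b * δ) ^ 2 * (γ⁻¹ * (1 / (n * m) * φfun (δ ^ 2)⁻¹))) := by
        congr 1
        field_simp
    _ = 2 * b * √γ⁻¹ * √(1 / (n * m)) * δ * √(φfun (δ ^ 2)⁻¹) := by
        rw [Real.sqrt_mul (sq_nonneg _), Real.sqrt_sq (by positivity),
          Real.sqrt_mul' _ (by positivity), Real.sqrt_mul' _ hφ0]
        ring

end Noise

lemma two_mul_two_mul_sqrt_inv_le {c γ : ℝ} (hc : 1 ≤ c) (hγ : 0 < γ) :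
    2 * 2 * √γ⁻¹ ≤ 4 * √2 * √((c + γ) / γ + 1) := by
  have hinv : γ⁻¹ ≤ 2 * ((c + γ) / γ + 1) := by
    rw [add_div, div_self hγ.ne']
    have hdiv : γ⁻¹ ≤ c / γ := by
      rw [inv_eq_one_div]
      gcongr
    linarith [inv_pos.2 hγ]
  rw [mul_assoc 4, ← Real.sqrt_mul zero_le_two]
  linarith [Real.sqrt_le_sqrt hinv]

end

/-- **Lemma 2 (expected supremum of the projected noise matrix over
Sobolev-constrained balls).** -/
theorem projected_noise_sup_bound (c γ : ℝ) (hc : 1 ≤ c) (hγ0 : 0 < γ) (hγ1 : γ < 1) :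
    ∀ (m n k0 : ℕ) (lam : ℕ → ℝ) (φ : ℕ → Fin m → ℝ) (Fbar : ℝ → ℝ)
      (S : Matrix (Fin m) (Fin m) ℝ) (μ : ℕ → ℝ) (ψ : ℕ → Fin m → ℝ) (φfun : ℝ → ℝ)
      (P : Measure (Obs m)),
      1 ≤ m → 1 ≤ n →
      IsEigenData m c lam φ k0 →
      IsSpectralMajorant m γ lam Fbar →
      SpectralRep m S μ ψ →
      MemPsi lam φ Fbar μ ψ φfun →
      IsProbabilityMeasure P → UniformDesign m P → (∀ᵐ z ∂P, |z.2.2| ≤ 2) →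
      ∀ δ : ℝ, 0 < δ →
        (∫ ω : Fin n → Obs m,
            sSup {x : ℝ | ∃ M : Matrix (Fin m) (Fin m) ℝ, M.IsSymm ∧
              hsNormSq M ≤ δ ^ 2 ∧ sobolevHSSq lam φ M ≤ 1 ∧
              x = |hsInner (calPData μ ψ (XiMat n P ω)) M|}
          ∂(Measure.pi fun _ : Fin n => P)) ≤
        4 * Real.sqrt 2 * Real.sqrt ((c + γ) / γ + 1) * Real.sqrt (1 / (n * m)) * δ *
          Real.sqrt (φfun ((δ ^ 2)⁻¹)) := by
  intro m n k0 lam φ Fbar S μ ψ φfun P _ hn hE hF hS hΨ _ hU hζ δ hδ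
  exact (projected_noise_sup_bound_general (Nat.one_le_iff_ne_zero.1 hn) hE.orth hE.nonneg hF
    hS.1 hΨ hU hζ hδ).trans (by gcongr ?_ * _ * _ * _; exact two_mul_two_mul_sqrt_inv_le hc hγ0)

end
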